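/- Let α > -1, -1 < β < 1, s ∈ ℕ, 0 ≤ k ≤ s-1, and let g be continuous on [-1,1]. If v ∈ C^s[-1,1] satisfies v^{(j)}(-1) = 0 for 0 ≤ j ≤ s-k-1, then ∫_{-1}^1 u_{g,k}^{(s)}(x) v^{(s-k)}(x) w_{α,β}(x) dx = ∫_{-1}^1 g(x) v(x) w_{α,β}(x) dx. -/

import Mathlib

open MeasureTheory Set ENNReal NNReal

noncomputable section

namespace JacobiApprox

/-- The Jacobi weight `w_{α,β}(x) = (1-x)^α (1+x)^β` on `(-1,1)`. -/
def w (α β x : ℝ) : ℝ := (1 - x) ^ α * (1 + x) ^ β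

/-- The weighted `L^p` norm `‖f‖_{L^p(w_{α,β})}`; for `p = ∞` it is the uniform
norm on `[-1,1]`. -/
def LpW (α β : ℝ) (p : ℝ≥0∞) (f : ℝ → ℝ) : ℝ :=
  if p = ⊤ then sSup ((fun x => |f x|) '' Icc (-1 : ℝ) 1)
  else (∫ x in Ioo (-1 : ℝ) 1, |f x| ^ p.toReal * w α β x) ^ (1 / p.toReal)

/-- Membership in `L^p(w_{α,β})` (`f ∈ C[-1,1]` when `p = ∞`). -/
def MemLpW (α β : ℝ) (p : ℝ≥0∞) (f : ℝ → ℝ) : Prop :=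
  Measurable f ∧
    (p ≠ ⊤ → IntegrableOn (fun x => |f x| ^ p.toReal * w α β x) (Ioo (-1 : ℝ) 1)) ∧
    (p = ⊤ → ContinuousOn f (Icc (-1 : ℝ) 1))

/-- `E_n(f)_{L^p(w_{α,β})}`: the error of best approximation of `f` by polynomials
of degree at most `n` in `L^p(w_{α,β})`. -/
def E (α β : ℝ) (p : ℝ≥0∞) (n : ℕ) (f : ℝ → ℝ) : ℝ :=
  sInf {r : ℝ | ∃ q : Polynomial ℝ, q.natDegree ≤ n ∧
    r = LpW α β p (fun x => f x - q.eval x)}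

/-- Membership in the Sobolev space `W_p^s(w_{α,β})`: `f` has `s` continuous
derivatives and `f^{(s)} ∈ L^p(w_{α,β})` (for `p = ∞` this is `f ∈ C^s[-1,1]`). -/
def MemW (α β : ℝ) (p : ℝ≥0∞) (s : ℕ) (f : ℝ → ℝ) : Prop :=
  ContDiff ℝ (s : ℕ∞) f ∧
    (p ≠ ⊤ → IntegrableOn (fun x => |iteratedDeriv s f x| ^ p.toReal * w α β x)
      (Ioo (-1 : ℝ) 1))

/-- The Sobolev norm `‖f‖_{W_p^s(w_{α,β})}` (max over derivatives when `p = ∞`). -/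
def WNorm (α β : ℝ) (p : ℝ≥0∞) (s : ℕ) (f : ℝ → ℝ) : ℝ :=
  if p = ⊤ then
    (Finset.range (s + 1)).sup' (Finset.nonempty_range_iff.mpr (Nat.succ_ne_zero s))
      (fun k => LpW α β ⊤ (iteratedDeriv k f))
  else (∑ k ∈ Finset.range (s + 1), (LpW α β p (iteratedDeriv k f)) ^ p.toReal) ^
    (1 / p.toReal)

/-- Pochhammer symbol (rising factorial) `(a)_k`. -/
def poch (a : ℝ) (k : ℕ) : ℝ := ∏ i ∈ Finset.range k, (a + i)

/-- The Jacobi polynomial `P_n^{(α,β)}`. -/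
def JP (α β : ℝ) (n : ℕ) (t : ℝ) : ℝ :=
  (poch (α + 1) n / n.factorial) *
    ∑ k ∈ Finset.range (n + 1),
      poch (-(n : ℝ)) k * poch ((n : ℝ) + α + β + 1) k /
        (poch (α + 1) k * k.factorial) * ((1 - t) / 2) ^ k

/-- The renormalized Jacobi polynomial `J_n^{α,β} = 2^n/(n+α+β+1)_n · P_n^{(α,β)}`. -/
def J (α β : ℝ) (n : ℕ) (t : ℝ) : ℝ :=
  2 ^ n / poch ((n : ℝ) + α + β + 1) n * JP α β n t

/-- The inner product `⟨f,g⟩_{α,β} = ∫_{-1}^1 f g w_{α,β}`. -/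
def ip (α β : ℝ) (f g : ℝ → ℝ) : ℝ := ∫ x in Ioo (-1 : ℝ) 1, f x * g x * w α β x

/-- `h_n^{α,β} = ⟨J_n^{α,β}, J_n^{α,β}⟩_{α,β}`. -/
def hJ (α β : ℝ) (n : ℕ) : ℝ := ip α β (J α β n) (J α β n)

/-- The Fourier–Jacobi coefficient `\hat f_n^{α,β}`. -/
def coeff (α β : ℝ) (n : ℕ) (f : ℝ → ℝ) : ℝ := ip α β f (J α β n) / hJ α β n

/-- The `n`-th partial sum `S_n^{α,β} f` of the Fourier–Jacobi series. -/
def S (α β : ℝ) (n : ℕ) (f : ℝ → ℝ) (x : ℝ) : ℝ :=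
  ∑ k ∈ Finset.range (n + 1), coeff α β k f * J α β k x

/-- An admissible cut-off function: `C^∞`, `η ≡ 1` on `[0,1]`, `η ≡ 0` on `[2,∞)`. -/
def Admissible (η : ℝ → ℝ) : Prop :=
  ContDiff ℝ (⊤ : ℕ∞) η ∧ (∀ t : ℝ, 0 ≤ t → t ≤ 1 → η t = 1) ∧ ∀ t : ℝ, 2 ≤ t → η t = 0

/-- The de la Vallée Poussin type operator `V_n^{α,β} f`. -/
def V (η : ℝ → ℝ) (α β : ℝ) (n : ℕ) (f : ℝ → ℝ) (x : ℝ) : ℝ :=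
  ∑ k ∈ Finset.range (2 * n + 1), η ((k : ℝ) / (n : ℝ)) * coeff α β k f * J α β k x

/-- The Sobolev orthogonal polynomial `𝒥_{n,θ}^{α-s,β-s}`. -/
def SJ (α β : ℝ) (s : ℕ) (θ : ℝ) (n : ℕ) (x : ℝ) : ℝ :=
  if n < s then (x - θ) ^ n / n.factorial
  else ∫ t in θ..x, (x - t) ^ (s - 1) / (s - 1).factorial * J α β (n - s) t

/-- The Sobolev inner product `⟨f,g⟩_{α,β}^{-s}`. -/
def ipS (α β : ℝ) (s : ℕ) (θ : ℝ) (lam : ℕ → ℝ) (f g : ℝ → ℝ) : ℝ :=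
  ip α β (iteratedDeriv s f) (iteratedDeriv s g) +
    ∑ k ∈ Finset.range s, lam k * iteratedDeriv k f θ * iteratedDeriv k g θ

/-- The Fourier coefficient `\hat{𝔣}_n^{α-s,β-s}` in the Sobolev orthogonal system. -/
def coeffS (α β : ℝ) (s : ℕ) (θ : ℝ) (lam : ℕ → ℝ) (n : ℕ) (f : ℝ → ℝ) : ℝ :=
  ipS α β s θ lam f (SJ α β s θ n) / ipS α β s θ lam (SJ α β s θ n) (SJ α β s θ n)

/-- The `n`-th partial sum `𝒮_{n,θ}^{α-s,β-s} f` of the Sobolev orthogonal expansion. -/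
def SS (α β : ℝ) (s : ℕ) (θ : ℝ) (lam : ℕ → ℝ) (n : ℕ) (f : ℝ → ℝ) (x : ℝ) : ℝ :=
  ∑ k ∈ Finset.range (n + 1), coeffS α β s θ lam k f * SJ α β s θ k x

/-- The operator `𝒱_{n,θ}^{α-s,β-s} f`. -/
def VS (η : ℝ → ℝ) (α β : ℝ) (s : ℕ) (θ : ℝ) (n : ℕ) (f : ℝ → ℝ) (x : ℝ) : ℝ :=
  (∑ k ∈ Finset.range s, iteratedDeriv k f θ * (x - θ) ^ k / k.factorial) +
    ∫ t in θ..x, (x - t) ^ (s - 1) / (s - 1).factorial *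
      V η α β n (iteratedDeriv s f) t

/-- `A_j^{α,β} = (α+β+2)_{2j}/(α+1)_j`. -/
def Acoef (α β : ℝ) (j : ℕ) : ℝ := poch (α + β + 2) (2 * j) / poch (α + 1) j

/-- `B_n^{α,β} = (α+1)_{n+1}/(α+β+2)_{2n+1}`. -/
def Bcoef (α β : ℝ) (n : ℕ) : ℝ := poch (α + 1) (n + 1) / poch (α + β + 2) (2 * n + 1)

/-- `D_j^{α,β} = (j+β+1)/((2j+α+β+2)(2j+α+β+3))`. -/
def Dcoef (α β : ℝ) (j : ℕ) : ℝ :=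
  ((j : ℝ) + β + 1) / ((2 * (j : ℝ) + α + β + 2) * (2 * (j : ℝ) + α + β + 3))

/-- The function `u_{g,k}` of the Aubin–Nitsche duality argument. -/
def u (α β : ℝ) (s k : ℕ) (g : ℝ → ℝ) (x : ℝ) : ℝ :=
  ∫ t in (-1 : ℝ)..x, (x - t) ^ (s - 1) / (s - 1).factorial * (1 / w α β t) *
    ∫ y in t..(1 : ℝ), (y - t) ^ (s - k - 1) / (s - k - 1).factorial * g y * w α β y

/-- The `s`-th derivative of `u_{g,k}`, given by its explicit formula. -/
def uDs (α β : ℝ) (s k : ℕ) (g : ℝ → ℝ) (x : ℝ) : ℝ :=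
  (1 / w α β x) *
    ∫ y in x..(1 : ℝ), (y - x) ^ (s - k - 1) / (s - k - 1).factorial * g y * w α β y


/-!
Since `uDs` carries the factor `1 / w`, the weight cancels on the left-hand side, leaving
`∫∫_{x < y} (y - x)^(m-1) / (m-1)! · g y · w y · v^(m) x` with `m = s - k`. Exchanging the order of
integration, the inner integral over `-1 < x < y` is the remainder of order `m` in Taylor's formula
for `v` at `-1`; since the Taylor polynomial vanishes, it equals `v y`.
-/

lemma setIntegral_Ioo_setIntegral_Ioo_swap {X F : Type*} [LinearOrder X] [TopologicalSpace X]
    [OrderClosedTopology X] [SecondCountableTopology X] [MeasurableSpace X] [OpensMeasurableSpace X]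
    [NormedAddCommGroup F] [NormedSpace ℝ F] {μ ν : Measure X} [SFinite μ] [SFinite ν]
    {a b : X} {f : X → X → F}
    (hf : IntegrableOn (Function.uncurry f) {p | a < p.1 ∧ p.1 < p.2 ∧ p.2 < b} (μ.prod ν)) :
    ∫ x in Ioo a b, ∫ y in Ioo x b, f x y ∂ν ∂μ = ∫ y in Ioo a b, ∫ x in Ioo a y, f x y ∂μ ∂ν := by
  set T : Set (X × X) := {p | a < p.1 ∧ p.1 < p.2 ∧ p.2 < b}
  have hT : MeasurableSet T :=
    (measurableSet_lt measurable_const measurable_fst).inter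
      ((measurableSet_lt measurable_fst measurable_snd).inter
        (measurableSet_lt measurable_snd measurable_const))
  have slice_fst (x : X) : (Ioo a b).indicator (fun x ↦ ∫ y in Ioo x b, f x y ∂ν) x =
      ∫ y, T.indicator (Function.uncurry f) (x, y) ∂ν := by
    by_cases hx : x ∈ Ioo a b
    · rw [indicator_of_mem hx, ← integral_indicator measurableSet_Ioo]
      exact integral_congr_ae (.of_forall fun y ↦ by simp [indicator_apply, T, hx.1])
    · have not_mem (y : X) : (x, y) ∉ T := fun h ↦ hx ⟨h.1, h.2.1.trans h.2.2⟩
      simp [hx, not_mem]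
  have slice_snd (y : X) : (Ioo a b).indicator (fun y ↦ ∫ x in Ioo a y, f x y ∂μ) y =
      ∫ x, T.indicator (Function.uncurry f) (x, y) ∂μ := by
    by_cases hy : y ∈ Ioo a b
    · rw [indicator_of_mem hy, ← integral_indicator measurableSet_Ioo]
      exact integral_congr_ae (.of_forall fun x ↦ by simp [indicator_apply, T, hy.2])
    · have not_mem (x : X) : (x, y) ∉ T := fun h ↦ hy ⟨h.1.trans h.2.1, h.2.2⟩
      simp [hy, not_mem]
  rw [← integral_indicator measurableSet_Ioo, ← integral_indicator measurableSet_Ioo]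
  simp only [slice_fst, slice_snd]
  exact integral_integral_swap (f := fun x y ↦ T.indicator (Function.uncurry f) (x, y))
    (hf.integrable_indicator hT)

section Volterra

variable {F : Type*} [NormedAddCommGroup F] [NormedSpace ℝ F]
  {a b : ℝ} {K : ℝ → ℝ → ℝ} {G : ℝ → ℝ} {D : ℝ → F}

lemma integrableOn_uncurry_mul_smul
    (hK : ContinuousOn (Function.uncurry K) (Icc a b ×ˢ Icc a b))
    (hG : IntegrableOn G (Ioo a b)) (hD : IntegrableOn D (Ioo a b)) :
    IntegrableOn (Function.uncurry fun x y ↦ (K x y * G y) • D x) (Ioo a b ×ˢ Ioo a b) := by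
  have hGD : IntegrableOn (fun p : ℝ × ℝ ↦ G p.2 • D p.1) (Ioo a b ×ˢ Ioo a b) := by
    rw [IntegrableOn, Measure.volume_eq_prod, ← Measure.prod_restrict]
    exact (hG.smul_prod hD).swap
  refine (hGD.continuousOn_smul_of_subset hK (isCompact_Icc.prod isCompact_Icc)
    (measurableSet_Ioo.prod measurableSet_Ioo)
    (prod_mono Ioo_subset_Icc_self Ioo_subset_Icc_self)).congr_fun (fun p _ ↦ ?_)
    (measurableSet_Ioo.prod measurableSet_Ioo)
  exact smul_smul _ _ _

variable [CompleteSpace F]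

lemma setIntegral_integral_mul_smul_swap
    (hK : ContinuousOn (Function.uncurry K) (Icc a b ×ˢ Icc a b))
    (hG : IntegrableOn G (Ioo a b)) (hD : IntegrableOn D (Ioo a b)) :
    ∫ x in Ioo a b, (∫ y in x..b, K x y * G y) • D x =
      ∫ y in Ioo a b, G y • ∫ x in a..y, K x y • D x := by
  have triangle_integrable := (integrableOn_uncurry_mul_smul hK hG hD).mono_set
    (s := {p | a < p.1 ∧ p.1 < p.2 ∧ p.2 < b})
    fun p ⟨hap, hp, hpb⟩ ↦ ⟨⟨hap, hp.trans hpb⟩, ⟨hap.trans hp, hpb⟩⟩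
  calc ∫ x in Ioo a b, (∫ y in x..b, K x y * G y) • D x
    _ = ∫ x in Ioo a b, ∫ y in Ioo x b, (K x y * G y) • D x := by
      refine setIntegral_congr_fun measurableSet_Ioo fun x hx ↦ ?_
      simp only [intervalIntegral.integral_of_le hx.2.le, integral_Ioc_eq_integral_Ioo,
        integral_smul_const]
    _ = ∫ y in Ioo a b, ∫ x in Ioo a y, (K x y * G y) • D x :=
      setIntegral_Ioo_setIntegral_Ioo_swap triangle_integrable
    _ = ∫ y in Ioo a b, G y • ∫ x in a..y, K x y • D x := by
      refine setIntegral_congr_fun measurableSet_Ioo fun y hy ↦ ?_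
      simp only [intervalIntegral.integral_of_le hy.1.le, integral_Ioc_eq_integral_Ioo,
        ← integral_smul, smul_smul, mul_comm (G y)]

lemma integral_pow_smul_iteratedDeriv_eq_self {n : ℕ} {v : ℝ → F}
    (hv : ContDiff ℝ (n + 1 : ℕ) v) (hva : ∀ j ≤ n, iteratedDeriv j v a = 0) (y : ℝ) :
    ∫ x in a..y, ((y - x) ^ n / n.factorial) • iteratedDeriv (n + 1) v x = v y := by
  rcases eq_or_ne a y with rfl | hay
  · simpa using (hva 0 n.zero_le).symm
  have within_eq {j : ℕ} (hj : j ≤ n + 1) {t : ℝ} (ht : t ∈ uIcc a y) :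
      iteratedDerivWithin j v (uIcc a y) t = iteratedDeriv j v t :=
    iteratedDerivWithin_eq_iteratedDeriv (uniqueDiffOn_uIcc hay)
      (hv.contDiffAt.of_le (by exact_mod_cast hj)) ht
  have taylor_eq_zero : taylorWithinEval v n (uIcc a y) a y = 0 := by
    rw [taylor_within_apply]
    refine Finset.sum_eq_zero fun j hj ↦ ?_
    have hjn : j ≤ n := Finset.mem_range_succ_iff.mp hj
    rw [within_eq (by lia) left_mem_uIcc, hva j hjn, smul_zero]
  have remainder := taylor_integral_remainder (x₀ := a) (x := y) hv.contDiffOn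
  rw [taylor_eq_zero, sub_zero] at remainder
  rw [remainder]
  exact intervalIntegral.integral_congr fun t ht ↦ by simp only [within_eq le_rfl ht]

lemma setIntegral_integral_pow_mul_smul_iteratedDeriv {n : ℕ} {v : ℝ → F}
    (hG : IntegrableOn G (Ioo a b)) (hv : ContDiff ℝ (n + 1 : ℕ) v)
    (hva : ∀ j ≤ n, iteratedDeriv j v a = 0) :
    ∫ x in Ioo a b, (∫ y in x..b, (y - x) ^ n / n.factorial * G y) • iteratedDeriv (n + 1) v x =
      ∫ y in Ioo a b, G y • v y := by
  have hD : IntegrableOn (iteratedDeriv (n + 1) v) (Ioo a b) :=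
    (hv.continuous_iteratedDeriv' _).integrableOn_Icc.mono_set Ioo_subset_Icc_self
  rw [setIntegral_integral_mul_smul_swap (K := fun x y ↦ (y - x) ^ n / n.factorial)
    (by fun_prop) hG hD]
  simp only [integral_pow_smul_iteratedDeriv_eq_self hv hva]

end Volterra

lemma w_neg (α β x : ℝ) : w α β (-x) = w β α x := by
  rw [w, w, sub_neg_eq_add, ← sub_eq_add_neg, mul_comm]

lemma w_pos (α β : ℝ) {x : ℝ} (hx : x ∈ Ioo (-1 : ℝ) 1) : 0 < w α β x :=
  mul_pos (Real.rpow_pos_of_pos (sub_pos.mpr hx.2) _)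
    (Real.rpow_pos_of_pos (neg_lt_iff_pos_add'.mp hx.1) _)

lemma intervalIntegrable_w_left (α : ℝ) {β : ℝ} (hβ : -1 < β) :
    IntervalIntegrable (w α β) volume (-1) 0 := by
  have right_factor : IntervalIntegrable (fun x : ℝ ↦ (1 + x) ^ β) volume (-1) 0 := by
    simpa using (intervalIntegral.intervalIntegrable_rpow' (a := 0) (b := 1) hβ).comp_add_left 1
  refine right_factor.continuousOn_mul (g := fun x ↦ (1 - x) ^ α) fun x hx ↦ ?_
  have hx0 : x ≤ 0 := (uIcc_of_le (by norm_num : (-1 : ℝ) ≤ 0) ▸ hx).2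
  have hne : 1 - x ≠ 0 := by linarith
  exact (ContinuousAt.rpow_const (by fun_prop) (Or.inl hne)).continuousWithinAt

lemma integrableOn_w {α β : ℝ} (hα : -1 < α) (hβ : -1 < β) :
    IntegrableOn (w α β) (Ioo (-1 : ℝ) 1) := by
  have right_half : IntervalIntegrable (w α β) volume 0 1 := by
    simpa [w_neg] using ((intervalIntegrable_w_left β hα).comp_sub_left 0).symm
  exact (intervalIntegrable_iff_integrableOn_Ioo_of_le (by norm_num)).mp
    ((intervalIntegrable_w_left α hβ).trans right_half)

lemma integrableOn_mul_w {α β : ℝ} (hα : -1 < α) (hβ : -1 < β) {g : ℝ → ℝ}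
    (hg : ContinuousOn g (Icc (-1 : ℝ) 1)) :
    IntegrableOn (fun x ↦ g x * w α β x) (Ioo (-1 : ℝ) 1) :=
  (integrableOn_w hα hβ).continuousOn_mul_of_subset hg isCompact_Icc measurableSet_Ioo
    Ioo_subset_Icc_self

lemma uDs_mul_w (α β : ℝ) (s k : ℕ) (g : ℝ → ℝ) {x : ℝ} (hx : x ∈ Ioo (-1 : ℝ) 1) :
    uDs α β s k g x * w α β x =
      ∫ y in x..1, (y - x) ^ (s - k - 1) / (s - k - 1).factorial * (g y * w α β y) := by
  rw [uDs, mul_right_comm, one_div_mul_cancel (w_pos α β hx).ne', one_mul]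
  simp only [mul_assoc]

theorem statement17_general (α β : ℝ) {s k : ℕ} (hk : k < s) {g v : ℝ → ℝ}
    (hg : IntegrableOn (fun x ↦ g x * w α β x) (Ioo (-1 : ℝ) 1))
    (hv : ContDiff ℝ (s - k : ℕ) v)
    (hbc : ∀ j ≤ s - k - 1, iteratedDeriv j v (-1) = 0) :
    ∫ x in Ioo (-1 : ℝ) 1, uDs α β s k g x * iteratedDeriv (s - k) v x * w α β x
      = ∫ x in Ioo (-1 : ℝ) 1, g x * v x * w α β x := by
  have order_eq : s - k - 1 + 1 = s - k := Nat.sub_add_cancel (Nat.sub_pos_of_lt hk)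
  have duality := setIntegral_integral_pow_mul_smul_iteratedDeriv hg (order_eq.symm ▸ hv) hbc
  rw [order_eq] at duality
  calc ∫ x in Ioo (-1 : ℝ) 1, uDs α β s k g x * iteratedDeriv (s - k) v x * w α β x
    _ = ∫ x in Ioo (-1 : ℝ) 1, (∫ y in x..1, (y - x) ^ (s - k - 1) / (s - k - 1).factorial *
          (g y * w α β y)) * iteratedDeriv (s - k) v x :=
      setIntegral_congr_fun measurableSet_Ioo fun x hx ↦ by
        rw [mul_right_comm, uDs_mul_w α β s k g hx]
    _ = ∫ y in Ioo (-1 : ℝ) 1, g y * w α β y * v y := duality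
    _ = ∫ x in Ioo (-1 : ℝ) 1, g x * v x * w α β x := by simp only [mul_right_comm]

theorem statement17 (α β : ℝ) (hα : -1 < α) (hβ1 : -1 < β) (hβ2 : β < 1)
    (s k : ℕ) (hs : 1 ≤ s) (hk : k ≤ s - 1)
    (g : ℝ → ℝ) (hg : ContinuousOn g (Icc (-1 : ℝ) 1))
    (v : ℝ → ℝ) (hv : ContDiff ℝ (s : ℕ∞) v)
    (hbc : ∀ j : ℕ, j ≤ s - k - 1 → iteratedDeriv j v (-1) = 0) :
    ∫ x in Ioo (-1 : ℝ) 1, uDs α β s k g x * iteratedDeriv (s - k) v x * w α β x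
      = ∫ x in Ioo (-1 : ℝ) 1, g x * v x * w α β x :=
  statement17_general α β (by lia) (integrableOn_mul_w hα hβ1 hg)
    (hv.of_le (WithTop.coe_le_coe.mpr (mod_cast s.sub_le k))) hbc

end JacobiApprox
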